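/- (Theorem 5) Let k ≥ 1 and for each i ∈ Fin k let B_i be a partial matrix over a field F with finite row index m_i and finite column index n_i, and let v_i be a partial column on rows m_i. Let M be the partial matrix on rows Σ i, m_i and columns Unit ⊕ (Σ i, n_i) whose first column is the stacked partial column (v_1; …; v_k), whose (i, i) diagonal block among the remaining columns is B_i, and all of whose other entries are unknown. Assume the stacked column (v_1; …; v_k) is not a junk column, i.e., some v_i has a known entry that is nonzero. Then mr(M) = max over i ∈ Fin k of ( mr([v_i | B_i]) + zero(v_i, B_i) ). -/

import Mathlib

/-- `N` is a completion of the partial matrix `(M, Ω)`: it agrees with `M`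
on all known positions `Ω`. -/
def IsCompletion {F m n : Type*} [Field F] (M : Matrix m n F) (Ω : Set (m × n))
    (N : Matrix m n F) : Prop :=
  ∀ p ∈ Ω, N p.1 p.2 = M p.1 p.2

/-- The minimum rank of the partial matrix `(M, Ω)`: the minimum of the ranks of
its completions. -/
noncomputable def mr {F m n : Type*} [Field F] [Fintype m] [Fintype n]
    (M : Matrix m n F) (Ω : Set (m × n)) : ℕ :=
  sInf {r | ∃ N : Matrix m n F, IsCompletion M Ω N ∧ N.rank = r}

/-- The partial matrix `[u | A]`: the partial column `u` (with known row set `Ωu`)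
adjoined as an extra (first) column to `A`. -/
def augMat {F m n : Type*} [Field F] (u : m → F) (A : Matrix m n F) :
    Matrix m (Unit ⊕ n) F :=
  Matrix.of fun i => Sum.elim (fun _ => u i) (A i)

/-- Known positions of the partial matrix `[u | A]`, inherited from `Ωu` and `ΩA`. -/
def augSet {m n : Type*} (Ωu : Set m) (ΩA : Set (m × n)) : Set (m × (Unit ⊕ n)) :=
  {p | Sum.elim (fun _ => p.1 ∈ Ωu) (fun j => (p.1, j) ∈ ΩA) p.2}

/-- `zero (u, A) = 1`, as a proposition: every completion of `[u | A]` attaining the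
minimum rank has zero `u`-column. -/
def zeroProp {F m n : Type*} [Field F] [Fintype m] [Fintype n]
    (u : m → F) (Ωu : Set m) (A : Matrix m n F) (ΩA : Set (m × n)) : Prop :=
  ∀ N : Matrix m (Unit ⊕ n) F, IsCompletion (augMat u A) (augSet Ωu ΩA) N →
    N.rank = mr (augMat u A) (augSet Ωu ΩA) → ∀ i, N i (Sum.inl ()) = 0
open Classical in
/-- `zero (u, A)` as a natural number: `1` if every minimum-rank completion of
`[u | A]` has zero `u`-column, and `0` otherwise. -/
noncomputable def zeroNat {F m n : Type*} [Field F] [Fintype m] [Fintype n]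
    (u : m → F) (Ωu : Set m) (A : Matrix m n F) (ΩA : Set (m × n)) : ℕ :=
  if zeroProp u Ωu A ΩA then 1 else 0

theorem mr_attained {F m n : Type*} [Field F] [Fintype m] [Fintype n]
    (M : Matrix m n F) (Ω : Set (m × n)) :
    ∃ N : Matrix m n F, IsCompletion M Ω N ∧ N.rank = mr M Ω :=
  Nat.sInf_mem (s := {r | ∃ N : Matrix m n F, IsCompletion M Ω N ∧ N.rank = r})
    ⟨M.rank, M, fun _ _ => rfl, rfl⟩

theorem mr_le_rank {F m n : Type*} [Field F] [Fintype m] [Fintype n]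
    {M : Matrix m n F} {Ω : Set (m × n)} {N : Matrix m n F} (h : IsCompletion M Ω N) :
    mr M Ω ≤ N.rank :=
  Nat.sInf_le ⟨N, h, rfl⟩

/-- Columns of a matrix in terms of its first column and `s` further vectors. -/
theorem exists_gen {F m n : Type*} [Field F] [Fintype m] [Fintype n]
    (N : Matrix m (Unit ⊕ n) F) (s : ℕ)
    (h : ((∃ i, N i (Sum.inl ()) ≠ 0) ∧ N.rank ≤ s + 1) ∨ N.rank ≤ s) :
    ∃ U : Matrix m (Fin s) F, ∀ j, ∃ (a : F) (x : Fin s → F), ∀ i,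
      N i (Sum.inr j) = N i (Sum.inl ()) * a + ∑ t, U i t * x t := by
  classical
  set V := Submodule.span F (Set.range N.col) with hV
  have hr : N.rank = Module.finrank F V := N.rank_eq_finrank_span_cols
  have hmem : ∀ j, N.col j ∈ V := fun j => Submodule.subset_span ⟨j, rfl⟩
  let w : V := ⟨N.col (Sum.inl ()), hmem _⟩
  obtain ⟨C, hC⟩ := Submodule.exists_isCompl (Submodule.span F {w})
  have hdim := Submodule.finrank_add_eq_of_isCompl hC
  have hCs : Module.finrank F C ≤ s := by
    rcases h with ⟨⟨i, hi⟩, h⟩ | h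
    · have hw : w ≠ 0 := by
        intro h0
        apply hi
        exact congrFun (congrArg Subtype.val h0) i
      rw [finrank_span_singleton hw] at hdim
      omega
    · omega
  haveI : Module.Free F C := Module.Free.of_divisionRing F C
  let b := Module.finBasis F C
  let g : (Fin s → F) →ₗ[F] C :=
    b.equivFun.symm.toLinearMap ∘ₗ LinearMap.funLeft F F (Fin.castLE hCs)
  have hg : Function.Surjective g := by
    apply b.equivFun.symm.surjective.comp
    exact LinearMap.funLeft_surjective_of_injective F F _ (Fin.castLE_injective hCs)
  let G : (Fin s → F) →ₗ[F] (m → F) := V.subtype ∘ₗ C.subtype ∘ₗ g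
  refine ⟨LinearMap.toMatrix' G, fun j => ?_⟩
  have hz : (⟨N.col (Sum.inr j), hmem _⟩ : V) ∈ Submodule.span F {w} ⊔ C := by
    rw [hC.sup_eq_top]; trivial
  obtain ⟨y, hy, z, hz, hyz⟩ := Submodule.mem_sup.1 hz
  obtain ⟨a, rfl⟩ := Submodule.mem_span_singleton.1 hy
  obtain ⟨x, hx⟩ := hg ⟨z, hz⟩
  refine ⟨a, x, fun i => ?_⟩
  have h1 := congrFun (congrArg Subtype.val hyz) i
  have h2 : (LinearMap.toMatrix' G).mulVec x = (z : m → F) := by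
    rw [LinearMap.toMatrix'_mulVec]
    simp [G, hx]
  have h3 := congrFun h2 i
  simp only [Matrix.mulVec, dotProduct] at h3
  rw [h3]
  simp only [Submodule.coe_add, Submodule.coe_smul, Pi.add_apply, Pi.smul_apply, smul_eq_mul] at h1
  rw [mul_comm]
  exact h1.symm

/-- If the rows of a submatrix already span, a coordinate vanishing on them vanishes everywhere. -/
theorem col_zero {F m m' n : Type*} [Field F] [Fintype m] [Fintype m'] [Fintype n]
    (K : Matrix m n F) (f : m' → m) (c : n) (hr : K.rank ≤ (K.submatrix f id).rank)
    (h0 : ∀ i, K (f i) c = 0) (i : m) : K i c = 0 := by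
  rw [Matrix.rank_eq_finrank_span_row, Matrix.rank_eq_finrank_span_row] at hr
  have hle : Submodule.span F (Set.range (K.submatrix f id).row) ≤
      Submodule.span F (Set.range K.row) := by
    apply Submodule.span_mono
    rintro _ ⟨j, rfl⟩
    exact ⟨f j, rfl⟩
  have heq := Submodule.eq_of_le_of_finrank_le hle hr
  have hi : K.row i ∈ Submodule.span F (Set.range K.row) := Submodule.subset_span ⟨i, rfl⟩
  rw [← heq] at hi
  have hk : Submodule.span F (Set.range (K.submatrix f id).row) ≤
      LinearMap.ker (LinearMap.proj c : (n → F) →ₗ[F] F) := by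
    rw [Submodule.span_le]
    rintro _ ⟨j, rfl⟩
    exact h0 j
  exact hk hi

/-- Theorem 5: for the partial matrix `M` whose first column is the stacked partial
column `(v₁; …; v_k)` (not a junk column), whose diagonal blocks among the remaining
columns are the partial matrices `Bᵢ`, and all of whose other entries are unknown,
`mr M = maxᵢ (mr [vᵢ | Bᵢ] + zero (vᵢ, Bᵢ))`. -/
theorem mr_sub_udiag {F : Type*} [Field F] {k : ℕ} (hk : 1 ≤ k)
    {mI nI : Fin k → Type*} [∀ i, Fintype (mI i)] [∀ i, Fintype (nI i)]
    (B : ∀ i, Matrix (mI i) (nI i) F) (ΩB : ∀ i, Set (mI i × nI i))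
    (v : ∀ i, mI i → F) (Ωv : ∀ i, Set (mI i))
    (M : Matrix (Σ i, mI i) (Unit ⊕ Σ i, nI i) F)
    (ΩM : Set ((Σ i, mI i) × (Unit ⊕ Σ i, nI i)))
    (hMv : ∀ (i : Fin k) (r : mI i), M ⟨i, r⟩ (Sum.inl ()) = v i r)
    (hMB : ∀ (i : Fin k) (r : mI i) (c : nI i), M ⟨i, r⟩ (Sum.inr ⟨i, c⟩) = B i r c)
    (hΩv : ∀ p : Σ i, mI i, (p, Sum.inl ()) ∈ ΩM ↔ p.2 ∈ Ωv p.1)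
    (hΩB : ∀ (p : Σ i, mI i) (q : Σ i, nI i),
      (p, Sum.inr q) ∈ ΩM ↔ ∃ h : p.1 = q.1, (h ▸ p.2, q.2) ∈ ΩB q.1)
    (hnotjunk : ∃ i, ∃ r ∈ Ωv i, v i r ≠ 0) :
    mr M ΩM = Finset.univ.sup
      (fun i : Fin k =>
        mr (augMat (v i) (B i)) (augSet (Ωv i) (ΩB i)) + zeroNat (v i) (Ωv i) (B i) (ΩB i)) := by
  classical
  apply le_antisymm
  · set r := Finset.univ.sup (fun i : Fin k =>
        mr (augMat (v i) (B i)) (augSet (Ωv i) (ΩB i)) + zeroNat (v i) (Ωv i) (B i) (ΩB i)) with hr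
    have hle : ∀ i, mr (augMat (v i) (B i)) (augSet (Ωv i) (ΩB i)) +
        zeroNat (v i) (Ωv i) (B i) (ΩB i) ≤ r := fun i =>
      Finset.le_sup (f := fun i : Fin k => mr (augMat (v i) (B i)) (augSet (Ωv i) (ΩB i)) +
        zeroNat (v i) (Ωv i) (B i) (ΩB i)) (Finset.mem_univ i)
    have hpos : 1 ≤ r := by
      obtain ⟨i, t, ht, hne⟩ := hnotjunk
      refine le_trans ?_ ((Nat.le_add_right _ _).trans (hle i))
      obtain ⟨N, hN, hNr⟩ := mr_attained (augMat (v i) (B i)) (augSet (Ωv i) (ΩB i))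
      rw [← hNr, Nat.one_le_iff_ne_zero]
      intro h0
      rw [Matrix.rank_eq_finrank_span_cols, Submodule.finrank_eq_zero,
        Submodule.span_eq_bot] at h0
      have h1 : N t (Sum.inl ()) = 0 := congrFun (h0 (N.col (Sum.inl ())) ⟨_, rfl⟩) t
      have h2 : N t (Sum.inl ()) = v i t := hN (t, Sum.inl ()) ht
      exact hne (h2 ▸ h1)
    obtain ⟨s, hs⟩ : ∃ s, r = s + 1 := ⟨r - 1, by omega⟩
    have key : ∀ i, ∃ N : Matrix (mI i) (Unit ⊕ nI i) F,
        IsCompletion (augMat (v i) (B i)) (augSet (Ωv i) (ΩB i)) N ∧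
        (((∃ t, N t (Sum.inl ()) ≠ 0) ∧ N.rank ≤ s + 1) ∨ N.rank ≤ s) := by
      intro i
      have hi := hle i
      by_cases hz : zeroProp (v i) (Ωv i) (B i) (ΩB i)
      · obtain ⟨N, hN, hNr⟩ := mr_attained (augMat (v i) (B i)) (augSet (Ωv i) (ΩB i))
        refine ⟨N, hN, Or.inr ?_⟩
        rw [zeroNat, if_pos hz] at hi
        omega
      · rw [zeroNat, if_neg hz] at hi
        unfold zeroProp at hz
        push Not at hz
        obtain ⟨N, hN, hNr, hne⟩ := hz
        exact ⟨N, hN, Or.inl ⟨hne, by omega⟩⟩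
    choose N hN hN2 using key
    choose U hU using fun i => exists_gen (N i) s (hN2 i)
    choose a x hax using hU
    let P : Matrix (Σ i, mI i) (Unit ⊕ Fin s) F :=
      Matrix.of fun p => Sum.elim (fun _ => N p.1 p.2 (Sum.inl ())) (U p.1 p.2)
    let Q : Matrix (Unit ⊕ Fin s) (Unit ⊕ Σ i, nI i) F :=
      Matrix.of fun t c => Sum.elim (fun _ => Sum.elim (fun _ => 1) (fun _ => 0) t)
        (fun q => Sum.elim (fun _ => a q.1 q.2) (x q.1 q.2) t) c
    have hPQ : IsCompletion M ΩM (P * Q) := by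
      rintro ⟨⟨i, t⟩, (⟨⟩ | ⟨j, c⟩)⟩ hp
      · have h1 := (hΩv _).1 hp
        have h2 : N i t (Sum.inl ()) = v i t := hN i (t, Sum.inl ()) h1
        simp [Matrix.mul_apply, P, Q, hMv, h2]
      · obtain ⟨h, hh⟩ := (hΩB _ _).1 hp
        dsimp only at h
        subst h
        have h2 : N i t (Sum.inr c) = B i t c := hN i (t, Sum.inr c) hh
        simp only [hMB]
        rw [← h2, hax]
        simp [Matrix.mul_apply, P, Q]
    calc mr M ΩM ≤ (P * Q).rank := mr_le_rank hPQ
      _ ≤ P.rank := Matrix.rank_mul_le_left _ _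
      _ ≤ Fintype.card (Unit ⊕ Fin s) := Matrix.rank_le_card_width _
      _ = r := by simp [hs]; omega
  · obtain ⟨N, hN, hNr⟩ := mr_attained M ΩM
    apply Finset.sup_le
    intro i _
    let g : Unit ⊕ nI i → Unit ⊕ Σ i, nI i := Sum.map id (fun c => ⟨i, c⟩)
    let f : mI i → Σ i, mI i := fun t => ⟨i, t⟩
    let K := N.submatrix id g
    have hK : K.rank ≤ mr M ΩM := hNr ▸ Matrix.rank_submatrix_le N id g
    have hKi : (K.submatrix f id).rank ≤ K.rank := Matrix.rank_submatrix_le K f id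
    have hc : IsCompletion (augMat (v i) (B i)) (augSet (Ωv i) (ΩB i)) (K.submatrix f id) := by
      rintro ⟨t, (⟨⟩ | c)⟩ hp
      · exact (hN (⟨i, t⟩, Sum.inl ()) ((hΩv _).2 hp)).trans (hMv i t)
      · exact (hN (⟨i, t⟩, Sum.inr ⟨i, c⟩) ((hΩB _ _).2 ⟨rfl, hp⟩)).trans (hMB i t c)
    have hm := mr_le_rank hc
    by_cases hz : zeroProp (v i) (Ωv i) (B i) (ΩB i)
    · rw [zeroNat, if_pos hz]
      by_contra hlt
      have h0 := hz _ hc (by omega)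
      have hall := col_zero K f (Sum.inl ()) (by omega) h0
      obtain ⟨j, t, ht, hne⟩ := hnotjunk
      apply hne
      rw [← hMv, ← hall ⟨j, t⟩]
      exact (hN (⟨j, t⟩, Sum.inl ()) ((hΩv _).2 ht)).symm
    · rw [zeroNat, if_neg hz]
      omega
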